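/- Let p, q ∈ M be projections, let 0 < δ < 1, and let x ∈ M satisfy ‖x‖ ≤ 1, ‖x*x − p‖₂ ≤ δ, and ‖xx* − q‖₂ ≤ δ. Then, setting y := qxp, one has ‖y*y − p‖₂ ≤ 5δ^{1/2}. -/

import Mathlib

/-!
Writing `y = qxp`, the projection identities give
`y*y - p = (px*x)(x*x - p)p + p(x*x - p)p - (px*)(xx* - q)(xp)`.
By the GNS construction `‖·‖₂` is a seminorm with `‖ab‖₂ ≤ ‖a‖ ‖b‖₂`, and the trace property, in
the form `‖z*‖₂ = ‖z‖₂`, gives the same bound for right multiplication. All the outer factors above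
are contractions, so `‖y*y - p‖₂ ≤ 2 ‖x*x - p‖₂ + ‖xx* - q‖₂`.
-/

open scoped ComplexOrder

/-- The tracial 2-norm `‖x‖₂ = (τ(x*x))^{1/2}` associated to a linear functional `τ`. -/
noncomputable def tnorm {M : Type*} [Ring M] [StarRing M] [Algebra ℂ M]
    (τ : M →ₗ[ℂ] ℂ) (x : M) : ℝ :=
  Real.sqrt (τ (star x * x)).re

theorem star_mul_self_sub_of_isStarProjection {R : Type*} [Ring R] [StarRing R] {p q : R}
    (hp : IsStarProjection p) (hq : IsStarProjection q) (x : R) :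
    star (q * x * p) * (q * x * p) - p =
      p * star x * x * (star x * x - p) * p + p * (star x * x - p) * p -
        p * star x * (x * star x - q) * (x * p) := by
  have hpp : p * p = p := hp.isIdempotentElem
  have h_mul : star (q * x * p) * (q * x * p) = p * star x * q * x * p :=
    calc star (q * x * p) * (q * x * p) = p * star x * (q * q) * x * p := by
          simp only [star_mul, hp.isSelfAdjoint.star_eq, hq.isSelfAdjoint.star_eq, mul_assoc]
      _ = p * star x * q * x * p := by rw [hq.isIdempotentElem.eq]
  rw [h_mul]
  simp only [mul_sub, sub_mul, hpp, mul_assoc]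
  abel

theorem tnorm_star {M : Type*} [Ring M] [StarRing M] [Algebra ℂ M] {τ : M →ₗ[ℂ] ℂ}
    (hτtr : ∀ x y : M, τ (x * y) = τ (y * x)) (x : M) : tnorm τ (star x) = tnorm τ x := by
  rw [tnorm, tnorm, star_star, hτtr]

section PositiveFunctional

variable {M : Type*} [CStarAlgebra M] {τ : M →ₗ[ℂ] ℂ}

attribute [local instance] CStarAlgebra.spectralOrder CStarAlgebra.spectralOrderedRing

/-- A linear functional that is nonnegative on the elements `x*x`, as a positive linear map for the
spectral order on `M`. It gives access to the GNS space of `τ`, whose seminorm is `tnorm τ`. -/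
noncomputable def positiveFunctional (hτpos : ∀ x : M, 0 ≤ τ (star x * x)) : M →ₚ[ℂ] ℂ :=
  .mk₀ τ fun a ha ↦ by
    obtain ⟨x, rfl⟩ := CStarAlgebra.nonneg_iff_eq_star_mul_self.1 ha
    exact hτpos x

theorem norm_toPreGNS_positiveFunctional (hτpos : ∀ x : M, 0 ≤ τ (star x * x)) (x : M) :
    ‖(positiveFunctional hτpos).toPreGNS x‖ = tnorm τ x :=
  rfl

theorem tnorm_add_le (hτpos : ∀ x : M, 0 ≤ τ (star x * x)) (x y : M) :
    tnorm τ (x + y) ≤ tnorm τ x + tnorm τ y := by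
  simp only [← norm_toPreGNS_positiveFunctional hτpos, map_add]
  exact norm_add_le _ _

theorem tnorm_sub_le (hτpos : ∀ x : M, 0 ≤ τ (star x * x)) (x y : M) :
    tnorm τ (x - y) ≤ tnorm τ x + tnorm τ y := by
  simp only [← norm_toPreGNS_positiveFunctional hτpos, map_sub]
  exact norm_sub_le _ _

theorem tnorm_mul_le_norm_mul_tnorm (hτpos : ∀ x : M, 0 ≤ τ (star x * x)) (a b : M) :
    tnorm τ (a * b) ≤ ‖a‖ * tnorm τ b :=
  ((positiveFunctional hτpos).leftMulMapPreGNS a).le_of_opNorm_le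
    (LinearMap.mkContinuous_norm_le _ (norm_nonneg a) _) ((positiveFunctional hτpos).toPreGNS b)

end PositiveFunctional

section Trace

variable {M : Type*} [CStarAlgebra M] {τ : M →ₗ[ℂ] ℂ}

theorem tnorm_mul_le_tnorm_mul_norm (hτpos : ∀ x : M, 0 ≤ τ (star x * x))
    (hτtr : ∀ x y : M, τ (x * y) = τ (y * x)) (a b : M) :
    tnorm τ (a * b) ≤ tnorm τ a * ‖b‖ :=
  calc tnorm τ (a * b) = tnorm τ (star b * star a) := by rw [← star_mul, tnorm_star hτtr]
    _ ≤ ‖star b‖ * tnorm τ (star a) := tnorm_mul_le_norm_mul_tnorm hτpos _ _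
    _ = tnorm τ a * ‖b‖ := by rw [norm_star, tnorm_star hτtr, mul_comm]

theorem tnorm_mul_mul_le_of_norm_le_one (hτpos : ∀ x : M, 0 ≤ τ (star x * x))
    (hτtr : ∀ x y : M, τ (x * y) = τ (y * x)) {a b : M} (ha : ‖a‖ ≤ 1) (hb : ‖b‖ ≤ 1) (z : M) :
    tnorm τ (a * z * b) ≤ tnorm τ z :=
  calc tnorm τ (a * z * b) ≤ tnorm τ (a * z) * ‖b‖ := tnorm_mul_le_tnorm_mul_norm hτpos hτtr _ _
    _ ≤ tnorm τ (a * z) := mul_le_of_le_one_right (Real.sqrt_nonneg _) hb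
    _ ≤ ‖a‖ * tnorm τ z := tnorm_mul_le_norm_mul_tnorm hτpos _ _
    _ ≤ tnorm τ z := mul_le_of_le_one_left (Real.sqrt_nonneg _) ha

theorem stmt5_general (hτpos : ∀ x : M, 0 ≤ τ (star x * x))
    (hτtr : ∀ x y : M, τ (x * y) = τ (y * x)) {p q x : M}
    (hp : IsStarProjection p) (hq : IsStarProjection q) (hx : ‖x‖ ≤ 1) :
    tnorm τ (star (q * x * p) * (q * x * p) - p) ≤
      2 * tnorm τ (star x * x - p) + tnorm τ (x * star x - q) := by
  have norm_p : ‖p‖ ≤ 1 := hp.norm_le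
  have norm_mul_le_one {a b : M} (ha : ‖a‖ ≤ 1) (hb : ‖b‖ ≤ 1) : ‖a * b‖ ≤ 1 :=
    (norm_mul_le a b).trans (mul_le_one₀ ha (norm_nonneg b) hb)
  have norm_px' : ‖p * star x‖ ≤ 1 := norm_mul_le_one norm_p ((norm_star x).trans_le hx)
  have pxx_le : tnorm τ (p * star x * x * (star x * x - p) * p) ≤ tnorm τ (star x * x - p) :=
    tnorm_mul_mul_le_of_norm_le_one hτpos hτtr (norm_mul_le_one norm_px' hx) norm_p _
  have p_le : tnorm τ (p * (star x * x - p) * p) ≤ tnorm τ (star x * x - p) :=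
    tnorm_mul_mul_le_of_norm_le_one hτpos hτtr norm_p norm_p _
  have px_le : tnorm τ (p * star x * (x * star x - q) * (x * p)) ≤ tnorm τ (x * star x - q) :=
    tnorm_mul_mul_le_of_norm_le_one hτpos hτtr norm_px' (norm_mul_le_one hx norm_p) _
  rw [star_mul_self_sub_of_isStarProjection hp hq, two_mul]
  exact (tnorm_sub_le hτpos _ _).trans <|
    add_le_add ((tnorm_add_le hτpos _ _).trans (add_le_add pxx_le p_le)) px_le

end Trace

theorem stmt5 {M : Type*} [CStarAlgebra M]
    (τ : M →ₗ[ℂ] ℂ) (hτ1 : τ 1 = 1)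
    (hτpos : ∀ x : M, 0 ≤ τ (star x * x))
    (hτtr : ∀ x y : M, τ (x * y) = τ (y * x))
    (p q : M) (hp1 : star p = p) (hp2 : p * p = p) (hq1 : star q = q) (hq2 : q * q = q)
    (δ : ℝ) (hδ0 : 0 < δ) (hδ1 : δ < 1)
    (x : M) (hx : ‖x‖ ≤ 1)
    (h1 : tnorm τ (star x * x - p) ≤ δ) (h2 : tnorm τ (x * star x - q) ≤ δ) :
    tnorm τ (star (q * x * p) * (q * x * p) - p) ≤ 5 * Real.sqrt δ := by
  have h := stmt5_general hτpos hτtr ⟨hp2, hp1⟩ ⟨hq2, hq1⟩ hx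
  linarith [Real.le_sqrt_self_iff.2 hδ1.le]
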